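/- arXiv:1410.1232 — 2 statements merged into one kernel-verified Lean document; each statement's English description precedes it below -/
import Mathlib

section
/- Assume additionally α ≠ 0 and p ≠ n/2. Then L_2 M = M L_2, where L_2 is the symmetric 2(N+1)×2(N+1) real matrix whose only nonzero entries (1-based indexing, together with the symmetric positions) are, for k = 1, …, N+1: (L_2)_{2k-1,2k-1} = (n-p+k)(p+k-1)/(p(n-p+1)); (L_2)_{2k-1,2k} = (n-p+N+1)(p+N+1)/(α(n-p+1)(n-2p)) · √( (n-p+k)(p+k-1)(n-p) / (p(p+k)(n-p+k-1)) ); and for k = 1, …, N: (L_2)_{2k-1,2k+1} = (N-k+1)(N+n+k+1)/(αp(n-p+1)) · √( k(p+k-1)(n-p+1+k)(n+k) / ((n+2k-1)(n+2k+1)(p+k)(n-p+k)) ). -/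
open Matrix

/-- Pochhammer symbol `(a)_k = a (a+1) ⋯ (a+k-1)`. -/
noncomputable def poch (a : ℝ) (k : ℕ) : ℝ := ∏ i ∈ Finset.range k, (a + i)

/-- Gegenbauer polynomial `C_w^λ(x)`, with the convention `C_w^λ = 0` for `w < 0`. -/
noncomputable def geg (l : ℝ) (w : ℤ) (x : ℝ) : ℝ :=
  if w < 0 then 0 else
    poch (2 * l) w.toNat / (w.toNat.factorial : ℝ) *
      ∑ k ∈ Finset.range (w.toNat + 1),
        (poch (-(w.toNat : ℝ)) k * poch ((w.toNat : ℝ) + 2 * l) k) /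
            (poch (l + 1 / 2) k * (k.factorial : ℝ)) * ((1 - x) / 2) ^ k

/-- The weight matrix `W_{p,n}(x)`. -/
noncomputable def Wmat (n : ℕ) (p : ℝ) (x : ℝ) : Matrix (Fin 2) (Fin 2) ℝ :=
  (1 - x ^ 2) ^ ((n : ℝ) / 2 - 1) •
    !![p * x ^ 2 + (n : ℝ) - p, -(n : ℝ) * x; -(n : ℝ) * x, ((n : ℝ) - p) * x ^ 2 + p]

/-- The matrix valued polynomial `P_w`. -/
noncomputable def Pmat (n : ℕ) (p : ℝ) (w : ℕ) (x : ℝ) : Matrix (Fin 2) (Fin 2) ℝ :=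
  !![1 / ((n : ℝ) + 1) * geg (((n : ℝ) + 1) / 2) (w : ℤ) x +
        1 / (p + w) * geg (((n : ℝ) + 3) / 2) ((w : ℤ) - 2) x,
      1 / (p + w) * geg (((n : ℝ) + 3) / 2) ((w : ℤ) - 1) x;
      1 / ((n : ℝ) - p + w) * geg (((n : ℝ) + 3) / 2) ((w : ℤ) - 1) x,
      1 / ((n : ℝ) + 1) * geg (((n : ℝ) + 1) / 2) (w : ℤ) x +
        1 / ((n : ℝ) - p + w) * geg (((n : ℝ) + 3) / 2) ((w : ℤ) - 2) x]

/-- The normalizing matrix `S_w`: the (diagonal, positive definite) inverse square root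
of `‖P_w‖² = ∫_{-1}^1 P_w W_{p,n} P_w^T dx`, given explicitly. -/
noncomputable def Smat (n : ℕ) (p : ℝ) (w : ℕ) : Matrix (Fin 2) (Fin 2) ℝ :=
  Real.sqrt (((w.factorial : ℝ) * ((n : ℝ) + 1) * ((n : ℝ) + 2 * w + 1) *
        Real.Gamma ((n : ℝ) / 2 + 3 / 2)) /
      (Real.sqrt Real.pi * 2 ^ (w / 2) * Real.Gamma ((n : ℝ) / 2 + 1 + (w / 2 : ℕ)) *
        ∏ k ∈ Finset.range ((w + 1) / 2), ((n : ℝ) + 2 * k + 1))) •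
    Matrix.diagonal ![Real.sqrt ((p + w) / (p * ((n : ℝ) - p + w + 1))),
      Real.sqrt (((n : ℝ) - p + w) / (((n : ℝ) - p) * (p + w + 1)))]

/-- The orthonormal matrix valued polynomials `Q_w = S_w P_w`. -/
noncomputable def Qmat (n : ℕ) (p : ℝ) (w : ℕ) (x : ℝ) : Matrix (Fin 2) (Fin 2) ℝ :=
  Smat n p w * Pmat n p w x

/-- The `2 × 2` block `M^{i,j} = ∫_{-1}^α Q_i(x) W_{p,n}(x) Q_j(x)^T dx`. -/
noncomputable def Mblk (n : ℕ) (p α : ℝ) (i j : ℕ) : Matrix (Fin 2) (Fin 2) ℝ :=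
  Matrix.of fun a b : Fin 2 =>
    ∫ x in (-1 : ℝ)..α, (Qmat n p i x * Wmat n p x * (Qmat n p j x)ᵀ) a b

/-- The full `2(N+1) × 2(N+1)` matrix `M`, with (1-based) entries
`M_{2i+1,2j+1} = M^{i,j}_{11}`, `M_{2i+1,2j+2} = M^{i,j}_{12}`,
`M_{2i+2,2j+1} = M^{i,j}_{21}`, `M_{2i+2,2j+2} = M^{i,j}_{22}`. -/
noncomputable def Mfull (n : ℕ) (p α : ℝ) (N : ℕ) :
    Matrix (Fin (2 * (N + 1))) (Fin (2 * (N + 1))) ℝ :=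
  Matrix.of fun r c =>
    Mblk n p α (r.val / 2) (c.val / 2) ⟨r.val % 2, by omega⟩ ⟨c.val % 2, by omega⟩

/-- The odd diagonal entries `(L_2)_{2k-1,2k-1}`. -/
noncomputable def L2a (n : ℕ) (p : ℝ) (k : ℕ) : ℝ :=
  ((n : ℝ) - p + k) * (p + k - 1) / (p * ((n : ℝ) - p + 1))

/-- The entries `(L_2)_{2k-1,2k}`. -/
noncomputable def L2b (n : ℕ) (p α : ℝ) (N : ℕ) (k : ℕ) : ℝ :=
  ((n : ℝ) - p + N + 1) * (p + N + 1) / (α * ((n : ℝ) - p + 1) * ((n : ℝ) - 2 * p)) *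
    Real.sqrt (((n : ℝ) - p + k) * (p + k - 1) * ((n : ℝ) - p) /
      (p * (p + k) * ((n : ℝ) - p + k - 1)))

/-- The entries `(L_2)_{2k-1,2k+1}`. -/
noncomputable def L2e (n : ℕ) (p α : ℝ) (N : ℕ) (k : ℕ) : ℝ :=
  ((N : ℝ) - k + 1) * ((N : ℝ) + n + k + 1) / (α * p * ((n : ℝ) - p + 1)) *
    Real.sqrt ((k : ℝ) * (p + k - 1) * ((n : ℝ) - p + 1 + k) * ((n : ℝ) + k) /
      (((n : ℝ) + 2 * k - 1) * ((n : ℝ) + 2 * k + 1) * (p + k) * ((n : ℝ) - p + k)))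

/-- The symmetric matrix `L_2`: in 1-based indexing its only nonzero entries (up to
symmetry) are `(L_2)_{2k-1,2k-1}`, `(L_2)_{2k-1,2k}` for `k = 1, …, N+1`, and
`(L_2)_{2k-1,2k+1}` for `k = 1, …, N`. -/
noncomputable def L2 (n : ℕ) (p α : ℝ) (N : ℕ) :
    Matrix (Fin (2 * (N + 1))) (Fin (2 * (N + 1))) ℝ :=
  Matrix.of fun i j =>
    let r := i.val + 1
    let s := j.val + 1
    if r = s ∧ r % 2 = 1 then L2a n p ((r + 1) / 2)
    else if s = r + 1 ∧ r % 2 = 1 then L2b n p α N (s / 2)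
    else if r = s + 1 ∧ s % 2 = 1 then L2b n p α N (r / 2)
    else if s = r + 2 ∧ r % 2 = 1 then L2e n p α N ((r + 1) / 2)
    else if r = s + 2 ∧ s % 2 = 1 then L2e n p α N ((s + 1) / 2)
    else 0

/-!
Since `p ≠ n - p`, the matrix `T = [[x, q / (q - p)], [p / (q - p), 0]]` with `q = n - p` makes
`T W_{p,n}` symmetric, so right multiplication of rows by `T` is self-adjoint for the form
`(r, s) ↦ ∫_{-1}^α r W_{p,n} sᵀ dx`. The rows of `Q_w` come from the Gegenbauer polynomial
`g = C_w^{(n+1)/2}` as multiples of `τ g = (p g + x g', g')` and `(g', q g + x g')`. Integration by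
parts shows that `-p (1 - x²) δ`, with `δ (a, b) = (b - x a)' - q a`, is the adjoint of `τ` on
functions that vanish at `α`; hence `r ↦ τ ((α - x) δ r)` is self-adjoint as well. The matrix of a
self-adjoint operator, when symmetric, commutes with the Gram matrix. The operator
`r ↦ K r T - τ ((α - x) δ r)` with `K = (q + N + 1) (p + N + 1)` maps the span of the rows of
`Q_0, …, Q_N` into itself, because this `K` cancels the contribution of the rows of `Q_{N+1}`, and
its matrix there is a multiple of `L_2`.
-/

open Polynomial

section Pochhammer

lemma poch_zero (a : ℝ) : poch a 0 = 1 := by simp [poch]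

lemma poch_succ (a : ℝ) (k : ℕ) : poch a (k + 1) = poch a k * (a + k) :=
  Finset.prod_range_succ _ k

lemma poch_succ_left (a : ℝ) (k : ℕ) : poch a (k + 1) = a * poch (a + 1) k := by
  simp only [poch, Finset.prod_range_succ', Nat.cast_zero, add_zero, mul_comm a]
  exact congrArg (· * a) (Finset.prod_congr rfl fun i _ => by push_cast; ring)

lemma poch_neg_add_one_succ (a : ℝ) (k : ℕ) :
    poch (-(a + 1)) (k + 1) = -(a + 1) * poch (-a) k := by
  rw [poch_succ_left, show -(a + 1) + 1 = -a by ring]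

lemma poch_pos {a : ℝ} (ha : 0 < a) (k : ℕ) : 0 < poch a k :=
  Finset.prod_pos fun _ _ => by positivity

lemma poch_neg_natCast_of_lt {w k : ℕ} (h : w < k) : poch (-(w : ℝ)) k = 0 :=
  Finset.prod_eq_zero (Finset.mem_range.mpr h) (neg_add_cancel _)

end Pochhammer

section GegenbauerCoefficients

/-- The coefficient of `((1 - x) / 2) ^ k` in the Gegenbauer polynomial `C_w^l(x)`. -/
noncomputable def gegCoeff (l : ℝ) (w k : ℕ) : ℝ :=
  poch (2 * l) w / (w.factorial : ℝ) *
    ((poch (-(w : ℝ)) k * poch ((w : ℝ) + 2 * l) k) / (poch (l + 1 / 2) k * (k.factorial : ℝ)))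

lemma gegCoeff_eq_zero_of_lt (l : ℝ) {w k : ℕ} (h : w < k) : gegCoeff l w k = 0 := by
  simp [gegCoeff, poch_neg_natCast_of_lt h]

variable {l : ℝ} (hl : 0 < l) (w k : ℕ)
include hl

lemma gegCoeff_succ_right :
    ((k : ℝ) + 1) * (k + (l + 1 / 2)) * gegCoeff l w (k + 1) =
      (k - w) * (k + (w + 2 * l)) * gegCoeff l w k := by
  simp only [gegCoeff, poch_succ, Nat.factorial_succ]
  push_cast
  field_simp
  ring

lemma gegCoeff_succ_succ :
    ((w : ℝ) + 1) * gegCoeff l (w + 1) (k + 1) =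
      (2 * l + w + 2 * (k + 1)) * gegCoeff l w (k + 1) - 2 * (2 * l + w + k) * gegCoeff l w k := by
  have hw : (w : ℝ) + 2 * l ≠ 0 := by positivity
  have hshift : poch ((w : ℝ) + 1 + 2 * l) (k + 1) =
      poch (w + 2 * l) k * (w + 2 * l + k) * (w + 2 * l + k + 1) / (w + 2 * l) := by
    rw [eq_div_iff hw, mul_comm, show (w : ℝ) + 1 + 2 * l = w + 2 * l + 1 by ring,
      ← poch_succ_left, poch_succ, poch_succ]
    push_cast
    ring
  simp only [gegCoeff, Nat.factorial_succ, poch_succ (2 * l), poch_succ (l + 1 / 2),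
    poch_succ (-(w : ℝ)), poch_succ ((w : ℝ) + 2 * l)]
  push_cast
  rw [poch_neg_add_one_succ, hshift]
  field_simp
  ring

lemma succ_mul_gegCoeff_succ :
    ((k : ℝ) + 1) * gegCoeff l (w + 1) (k + 1) = -4 * l * gegCoeff (l + 1) w k := by
  have hw : 2 * l + 1 + w ≠ 0 := by positivity
  have hshift : poch (2 * l) (w + 1) =
      2 * l * (2 * l + 1) * poch (2 * (l + 1)) w / (2 * l + 1 + w) := by
    rw [eq_div_iff hw, mul_assoc (2 * l), show 2 * (l + 1) = 2 * l + 1 + 1 by ring,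
      ← poch_succ_left, ← poch_succ_left, poch_succ _ (w + 1)]
    push_cast
    ring
  simp only [gegCoeff, Nat.factorial_succ]
  push_cast
  rw [poch_neg_add_one_succ, hshift, poch_succ_left (l + 1 / 2),
    poch_succ_left ((w : ℝ) + 1 + 2 * l),
    show l + 1 / 2 + 1 = l + 1 + 1 / 2 by ring,
    show (w : ℝ) + 1 + 2 * l + 1 = w + 2 * (l + 1) by ring]
  field_simp
  ring

end GegenbauerCoefficients

section GegenbauerPolynomials

/-- The Gegenbauer polynomial `C_w^l(x)` as a polynomial in `t = (1 - x) / 2`, the variable of its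
hypergeometric expansion. -/
noncomputable def gegPolyAtOne (l : ℝ) (w : ℕ) : ℝ[X] :=
  ∑ k ∈ Finset.range (w + 1), C (gegCoeff l w k) * X ^ k

/-- The Gegenbauer polynomial `C_w^l(x)` as a polynomial in `x`. -/
noncomputable def gegPoly (l : ℝ) (w : ℕ) : ℝ[X] :=
  (gegPolyAtOne l w).comp (C (1 / 2) * (1 - X))

/-- The differential operator `(1 - x²) g'' - (2l + 1) x g'` of the Gegenbauer equation. -/
noncomputable def gegOp (l : ℝ) (g : ℝ[X]) : ℝ[X] :=
  (1 - X ^ 2) * derivative (derivative g) - C (2 * l + 1) * X * derivative g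

lemma coeff_gegPolyAtOne (l : ℝ) (w k : ℕ) : (gegPolyAtOne l w).coeff k = gegCoeff l w k := by
  simp only [gegPolyAtOne, finsetSum_coeff, coeff_C_mul_X_pow, Finset.sum_ite_eq, Finset.mem_range]
  split_ifs with h
  · rfl
  · exact (gegCoeff_eq_zero_of_lt l (by lia)).symm

lemma eval_gegPoly (l : ℝ) (w : ℕ) (x : ℝ) :
    (gegPoly l w).eval x = (gegPolyAtOne l w).eval ((1 - x) / 2) := by
  simp [gegPoly, eval_comp, div_eq_inv_mul]

lemma geg_natCast (l : ℝ) (w : ℕ) (x : ℝ) : geg l (w : ℤ) x = (gegPoly l w).eval x := by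
  simp only [eval_gegPoly, geg, gegPolyAtOne, eval_finsetSum, Finset.mul_sum, Int.toNat_natCast,
    Int.natCast_nonneg, not_lt.mpr, if_false, eval_mul, eval_C, eval_pow, eval_X, gegCoeff,
    mul_assoc]

lemma gegPoly_zero (l : ℝ) : gegPoly l 0 = 1 := by
  simp [gegPoly, gegPolyAtOne, gegCoeff, poch_zero]

lemma coeff_X_mul_derivative (P : ℝ[X]) (k : ℕ) :
    (X * derivative P).coeff k = k * P.coeff k := by
  cases k with
  | zero => simp
  | succ k => rw [coeff_X_mul, coeff_derivative, mul_comm]; push_cast; rfl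

lemma eval_derivative_gegPoly (l : ℝ) (w : ℕ) (x : ℝ) : (derivative (gegPoly l w)).eval x =
    -(1 / 2) * (derivative (gegPolyAtOne l w)).eval ((1 - x) / 2) := by
  simp [gegPoly, derivative_comp, eval_comp, div_eq_inv_mul]

lemma eval_derivative_derivative_gegPoly (l : ℝ) (w : ℕ) (x : ℝ) :
    (derivative (derivative (gegPoly l w))).eval x =
      1 / 4 * (derivative (derivative (gegPolyAtOne l w))).eval ((1 - x) / 2) := by
  simp only [gegPoly, div_eq_inv_mul, mul_one, derivative_comp, derivative_mul, derivative_C,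
    zero_mul, derivative_sub, derivative_one, derivative_X, zero_sub, mul_neg, zero_add, neg_mul,
    derivative_neg, neg_neg, eval_mul, eval_C, eval_comp, eval_sub, eval_one, eval_X]
  ring

variable {l : ℝ} (hl : 0 < l) (w : ℕ)
include hl

lemma gegPolyAtOne_ode :
    derivative (X * derivative (gegPolyAtOne l w)) + C (l - 1 / 2) * derivative (gegPolyAtOne l w) =
      X * derivative (X * derivative (gegPolyAtOne l w)) +
        C (2 * l) * (X * derivative (gegPolyAtOne l w)) -
          C ((w : ℝ) * (w + 2 * l)) * gegPolyAtOne l w := by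
  ext k
  simp only [coeff_add, coeff_sub, coeff_C_mul, coeff_X_mul_derivative, coeff_derivative,
    coeff_gegPolyAtOne]
  push_cast
  linear_combination gegCoeff_succ_right hl w k

lemma gegPolyAtOne_succ :
    C ((w : ℝ) + 1) * gegPolyAtOne l (w + 1) =
      C (2 * l + w) * gegPolyAtOne l w + 2 * (X * derivative (gegPolyAtOne l w)) -
        2 * (X * (C (2 * l + w) * gegPolyAtOne l w + X * derivative (gegPolyAtOne l w))) := by
  ext k
  rw [← C_ofNat]
  cases k with
  | zero =>
    simp only [coeff_add, coeff_sub, mul_coeff_zero, coeff_C_zero, coeff_gegPolyAtOne,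
      coeff_X_zero, gegCoeff, poch_zero, poch_succ, Nat.factorial_succ]
    push_cast
    field_simp
    ring
  | succ k =>
    simp only [coeff_add, coeff_sub, coeff_C_mul, coeff_X_mul, coeff_X_mul_derivative,
      coeff_derivative, coeff_gegPolyAtOne]
    linear_combination gegCoeff_succ_succ hl w k

lemma derivative_gegPolyAtOne_succ :
    derivative (gegPolyAtOne l (w + 1)) = C (-4 * l) * gegPolyAtOne (l + 1) w := by
  ext k
  rw [coeff_derivative, coeff_C_mul, coeff_gegPolyAtOne, coeff_gegPolyAtOne,
    ← succ_mul_gegCoeff_succ hl w k, mul_comm]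

lemma gegOp_gegPoly : gegOp l (gegPoly l w) = -(C ((w : ℝ) * (w + 2 * l)) * gegPoly l w) := by
  refine Polynomial.funext fun x => ?_
  have ode := congrArg (eval ((1 - x) / 2)) (gegPolyAtOne_ode hl w)
  simp only [derivative_mul, derivative_X, eval_add, eval_sub, eval_mul, eval_C, eval_X,
    eval_one] at ode
  simp only [gegOp, eval_sub, eval_mul, eval_neg, eval_C, eval_X, eval_one, eval_pow,
    eval_gegPoly, eval_derivative_gegPoly, eval_derivative_derivative_gegPoly]
  linear_combination ode

lemma gegPoly_succ :
    C ((w : ℝ) + 1) * gegPoly l (w + 1) =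
      C (2 * l + w) * X * gegPoly l w - (1 - X ^ 2) * derivative (gegPoly l w) := by
  refine Polynomial.funext fun x => ?_
  have raise := congrArg (eval ((1 - x) / 2)) (gegPolyAtOne_succ hl w)
  simp only [eval_add, eval_sub, eval_mul, eval_C, eval_X, eval_ofNat] at raise
  simp only [eval_sub, eval_mul, eval_C, eval_X, eval_one, eval_pow, eval_gegPoly,
    eval_derivative_gegPoly]
  linear_combination raise

lemma derivative_gegPoly_succ :
    derivative (gegPoly l (w + 1)) = C (2 * l) * gegPoly (l + 1) w := by
  refine Polynomial.funext fun x => ?_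
  simp only [eval_mul, eval_C, eval_gegPoly, eval_derivative_gegPoly,
    derivative_gegPolyAtOne_succ hl]
  ring

lemma derivative_gegPoly_succ_eq_add :
    derivative (gegPoly l (w + 1)) =
      C (2 * l + w) * gegPoly l w + X * derivative (gegPoly l w) := by
  have raise' := congrArg derivative (gegPoly_succ hl w)
  have ode := gegOp_gegPoly hl w
  have hw : (C ((w : ℝ) + 1) : ℝ[X]) ≠ 0 := C_ne_zero.mpr (by positivity)
  simp only [derivative_mul, derivative_C, derivative_sub, derivative_one, derivative_X,
    derivative_X_pow, Nat.cast_ofNat] at raise'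
  simp only [gegOp, C_add, C_mul, C_1, C_ofNat] at raise' ode hw ⊢
  apply mul_left_cancel₀ hw
  linear_combination raise' - ode

lemma one_sub_sq_mul_derivative_gegPoly_succ :
    (1 - X ^ 2) * derivative (gegPoly l (w + 1)) + C ((w : ℝ) + 1) * X * gegPoly l (w + 1) =
      C (2 * l + w) * gegPoly l w := by
  linear_combination (1 - X ^ 2) * derivative_gegPoly_succ_eq_add hl w + X * gegPoly_succ hl w

lemma geg_add_one_sub_one (x : ℝ) :
    geg (l + 1) ((w : ℤ) - 1) x = (derivative (gegPoly l w)).eval x / (2 * l) := by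
  cases w with
  | zero => simp [gegPoly_zero, geg]
  | succ w =>
    rw [Nat.cast_succ, add_sub_cancel_right, geg_natCast, derivative_gegPoly_succ hl, eval_mul,
      eval_C, mul_div_cancel_left₀ _ (by positivity)]

lemma geg_add_one_sub_two (x : ℝ) :
    geg (l + 1) ((w : ℤ) - 2) x =
      (x * (derivative (gegPoly l w)).eval x - w * (gegPoly l w).eval x) / (2 * l) := by
  cases w with
  | zero => simp [gegPoly_zero, geg]
  | succ w =>
    have raise := congrArg (eval x) (gegPoly_succ hl w)
    have hderiv := congrArg (eval x) (derivative_gegPoly_succ_eq_add hl w)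
    simp only [eval_add, eval_sub, eval_mul, eval_C, eval_X, eval_one, eval_pow] at raise hderiv
    rw [show ((w + 1 : ℕ) : ℤ) - 2 = (w : ℤ) - 1 by push_cast; ring, geg_add_one_sub_one hl]
    congr 1
    push_cast
    linear_combination raise - x * hderiv

end GegenbauerPolynomials

section PolynomialRows

/-- The rows of a matrix polynomial with two columns. -/
abbrev PolyRow : Type := ℝ[X] × ℝ[X]

/-- The map `g ↦ (p g + x g', g')`, which sends `C_w^{(n+1)/2}` to the first row of `P_w`, up to a
scalar. -/
noncomputable def firstRow (p : ℝ) : ℝ[X] →ₗ[ℝ] PolyRow :=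
  (p • LinearMap.id + LinearMap.mulLeft ℝ X ∘ₗ derivative).prod derivative

/-- The map `g ↦ (g', q g + x g')`, which for `q = n - p` sends `C_w^{(n+1)/2}` to the second row
of `P_w`, up to a scalar. -/
noncomputable def secondRow (q : ℝ) : ℝ[X] →ₗ[ℝ] PolyRow :=
  derivative.prod (q • LinearMap.id + LinearMap.mulLeft ℝ X ∘ₗ derivative)

/-- The differential operator `δ (a, b) = (b - x a)' - q a`. On polynomials that vanish at `α`,
`-p (1 - x²) δ` is the adjoint of `firstRow p` for the weight `W_{p,p+q}` on `[-1, α]`. -/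
noncomputable def rowDiff (q : ℝ) : PolyRow →ₗ[ℝ] ℝ[X] :=
  derivative ∘ₗ (LinearMap.snd ℝ ℝ[X] ℝ[X] - LinearMap.mulLeft ℝ X ∘ₗ LinearMap.fst ℝ ℝ[X] ℝ[X]) -
    q • LinearMap.fst ℝ ℝ[X] ℝ[X]

/-- Right multiplication of rows by the matrix `[[x, q / (q - p)], [p / (q - p), 0]]`. -/
noncomputable def rowMul (p q : ℝ) : PolyRow →ₗ[ℝ] PolyRow :=
  (LinearMap.mulLeft ℝ X ∘ₗ LinearMap.fst ℝ ℝ[X] ℝ[X] +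
    (p / (q - p)) • LinearMap.snd ℝ ℝ[X] ℝ[X]).prod ((q / (q - p)) • LinearMap.fst ℝ ℝ[X] ℝ[X])

/-- The form `(r, s) ↦ r V sᵀ`, where `V = [[p x² + q, -(p + q) x], [-(p + q) x, q x² + p]]` is the
polynomial factor of the weight `W_{p,p+q}`. -/
noncomputable def weightForm (p q : ℝ) : PolyRow →ₗ[ℝ] PolyRow →ₗ[ℝ] ℝ[X] :=
  LinearMap.mk₂ ℝ
    (fun r s => (C p * X ^ 2 + C q) * r.1 * s.1 - C (p + q) * X * (r.1 * s.2 + r.2 * s.1) +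
      (C q * X ^ 2 + C p) * r.2 * s.2)
    (fun _ _ _ => by simp only [Prod.fst_add, Prod.snd_add]; ring)
    (fun _ _ _ => by simp only [Prod.smul_fst, Prod.smul_snd, smul_eq_C_mul]; ring)
    (fun _ _ _ => by simp only [Prod.fst_add, Prod.snd_add]; ring)
    (fun _ _ _ => by simp only [Prod.smul_fst, Prod.smul_snd, smul_eq_C_mul]; ring)

lemma firstRow_apply (p : ℝ) (g : ℝ[X]) :
    firstRow p g = (C p * g + X * derivative g, derivative g) := by
  simp [firstRow, smul_eq_C_mul]

lemma secondRow_apply (q : ℝ) (g : ℝ[X]) :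
    secondRow q g = (derivative g, C q * g + X * derivative g) := by
  simp [secondRow, smul_eq_C_mul]

lemma rowDiff_apply (q : ℝ) (r : PolyRow) :
    rowDiff q r = derivative (r.2 - X * r.1) - C q * r.1 := by
  simp [rowDiff, smul_eq_C_mul]

lemma rowMul_apply (p q : ℝ) (r : PolyRow) :
    rowMul p q r = (X * r.1 + C (p / (q - p)) * r.2, C (q / (q - p)) * r.1) := by
  simp [rowMul, smul_eq_C_mul]

lemma weightForm_apply (p q : ℝ) (r s : PolyRow) :
    weightForm p q r s =
      (C p * X ^ 2 + C q) * r.1 * s.1 - C (p + q) * X * (r.1 * s.2 + r.2 * s.1) +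
        (C q * X ^ 2 + C p) * r.2 * s.2 := rfl

lemma weightForm_comm (p q : ℝ) (r s : PolyRow) : weightForm p q r s = weightForm p q s r := by
  simp only [weightForm_apply]; ring

lemma isSelfAdjoint_rowMul {p q : ℝ} (hpq : q - p ≠ 0) :
    (weightForm p q).IsSelfAdjoint (rowMul p q) := by
  intro r s
  refine Polynomial.funext fun x => ?_
  simp only [weightForm_apply, rowMul_apply, eval_add, eval_sub, eval_mul, eval_pow, eval_C, eval_X]
  field_simp
  ring

lemma weightForm_firstRow (p q : ℝ) (g : ℝ[X]) (s : PolyRow) :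
    weightForm p q (firstRow p g) s =
      C p * ((1 - X ^ 2) * derivative (g * (s.2 - X * s.1)) -
        C (p + q) * X * (g * (s.2 - X * s.1)) - (1 - X ^ 2) * g * rowDiff q s) := by
  simp only [weightForm_apply, firstRow_apply, rowDiff_apply, derivative_mul, derivative_sub,
    derivative_X, C_add]
  ring

lemma rowMul_firstRow {p q : ℝ} (hpq : q - p ≠ 0) (g : ℝ[X]) :
    rowMul p q (firstRow p g) = (X : ℝ[X]) • firstRow p g + (p / (q - p)) • secondRow q g := by
  have hsplit : q / (q - p) = 1 + p / (q - p) := by field_simp; ring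
  simp only [rowMul_apply, firstRow_apply, secondRow_apply, Prod.smul_mk, smul_eq_C_mul,
    smul_eq_mul, Prod.mk_add_mk, Prod.mk.injEq, true_and]
  refine Polynomial.funext fun x => ?_
  simp only [eval_add, eval_mul, eval_C, eval_X]
  linear_combination x * (derivative g).eval x * hsplit

lemma rowMul_secondRow {p q : ℝ} (hpq : q - p ≠ 0) (g : ℝ[X]) :
    rowMul p q (secondRow q g) = (q / (q - p)) • firstRow p g := by
  have hsplit : q / (q - p) = 1 + p / (q - p) := by field_simp; ring
  simp only [rowMul_apply, firstRow_apply, secondRow_apply, Prod.smul_mk, smul_eq_C_mul,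
    Prod.mk.injEq, and_true]
  refine Polynomial.funext fun x => ?_
  simp only [eval_add, eval_mul, eval_C, eval_X]
  linear_combination -x * (derivative g).eval x * hsplit

lemma rowDiff_firstRow {p q l : ℝ} (hl : 2 * l = p + q + 1) (g : ℝ[X]) :
    rowDiff q (firstRow p g) = gegOp l g - C (p * (q + 1)) * g := by
  simp only [rowDiff_apply, firstRow_apply, gegOp, hl, derivative_mul, derivative_sub,
    derivative_add, derivative_X, derivative_C, C_add, C_mul, C_1]
  ring

lemma rowDiff_secondRow (q : ℝ) (g : ℝ[X]) : rowDiff q (secondRow q g) = 0 := by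
  simp only [rowDiff_apply, secondRow_apply, add_sub_cancel_right, derivative_mul, derivative_C,
    zero_mul, zero_add, sub_self]

lemma firstRow_X_mul (p : ℝ) (g : ℝ[X]) :
    firstRow p (X * g) = (X : ℝ[X]) • firstRow p g + g • (X, 1) := by
  simp only [firstRow_apply, derivative_mul, derivative_X, Prod.smul_mk, smul_eq_mul,
    Prod.mk_add_mk]
  ext1 <;> ring

lemma firstRow_one_sub_sq_mul_derivative_sub {p q l : ℝ} (hl : 2 * l = p + q + 1) (g : ℝ[X]) :
    firstRow p ((1 - X ^ 2) * derivative g - C q * X * g) =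
      p • secondRow q g + (gegOp l g - C (q * (p + 1)) * g) • (X, 1) := by
  simp only [firstRow_apply, secondRow_apply, gegOp, hl, derivative_mul, derivative_sub,
    derivative_X, derivative_C, derivative_one, derivative_X_pow, C_add, C_mul, C_1, Prod.smul_mk,
    smul_eq_C_mul, smul_eq_mul, Prod.mk_add_mk, Nat.cast_ofNat, C_ofNat]
  ext1 <;> ring

end PolynomialRows

section TruncatedIntegral

variable {s α : ℝ} (hs : -1 < s) (hα : α ∈ Set.Ioo (-1 : ℝ) 1)
include hs hα

lemma intervalIntegrable_one_sub_sq_rpow :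
    IntervalIntegrable (fun x : ℝ => (1 - x ^ 2) ^ s) MeasureTheory.volume (-1) α := by
  have hleft : IntervalIntegrable (fun x : ℝ => (x + 1) ^ s) MeasureTheory.volume (-1) α := by
    have h := (intervalIntegral.intervalIntegrable_rpow' (a := 0) (b := α + 1) hs).comp_add_right 1
    rwa [zero_sub, add_sub_cancel_right] at h
  have hright : ContinuousOn (fun x : ℝ => (1 - x) ^ s) (Set.uIcc (-1) α) := by
    refine ContinuousOn.rpow_const (by fun_prop) fun x hx => Or.inl ?_
    rw [Set.uIcc_of_le hα.1.le] at hx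
    linarith [hx.2, hα.2]
  refine (hleft.mul_continuousOn hright).congr fun x hx => ?_
  rw [Set.uIoc_of_le hα.1.le] at hx
  change (x + 1) ^ s * (1 - x) ^ s = (1 - x ^ 2) ^ s
  rw [← Real.mul_rpow (by linarith [hx.1]) (by linarith [hx.2, hα.2])]
  ring_nf

lemma intervalIntegrable_one_sub_sq_rpow_mul_eval (P : ℝ[X]) :
    IntervalIntegrable (fun x : ℝ => (1 - x ^ 2) ^ s * P.eval x) MeasureTheory.volume (-1) α :=
  (intervalIntegrable_one_sub_sq_rpow hs hα).mul_continuousOn P.continuous.continuousOn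

/-- Integration of polynomials over `[-1, α]` against the scalar weight `(1 - x²) ^ s`. -/
noncomputable def truncIntegral : ℝ[X] →ₗ[ℝ] ℝ where
  toFun P := ∫ x in (-1 : ℝ)..α, (1 - x ^ 2) ^ s * P.eval x
  map_add' P Q := by
    simp only [eval_add, mul_add]
    exact intervalIntegral.integral_add (intervalIntegrable_one_sub_sq_rpow_mul_eval hs hα P)
      (intervalIntegrable_one_sub_sq_rpow_mul_eval hs hα Q)
  map_smul' c P := by
    simp only [eval_smul, smul_eq_mul, mul_left_comm _ c, RingHom.id_apply]
    exact intervalIntegral.integral_const_mul ..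

lemma truncIntegral_apply (P : ℝ[X]) :
    truncIntegral hs hα P = ∫ x in (-1 : ℝ)..α, (1 - x ^ 2) ^ s * P.eval x := rfl

-- The integrand is the derivative of `(1 - x²) ^ (s + 1) P`, which vanishes at `-1` and at `α`.
lemma truncIntegral_exact {P : ℝ[X]} (hP : P.eval α = 0) :
    truncIntegral hs hα ((1 - X ^ 2) * derivative P - C (2 * (s + 1)) * X * P) = 0 := by
  have hs1 : 0 < s + 1 := by linarith
  rw [truncIntegral_apply, intervalIntegral.integral_eq_sub_of_hasDerivAt_of_le
    (f := fun x => (1 - x ^ 2) ^ (s + 1) * P.eval x) hα.1.le ?_ ?_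
    (intervalIntegrable_one_sub_sq_rpow_mul_eval hs hα _)]
  · simp [hP, Real.zero_rpow hs1.ne']
  · exact (ContinuousOn.rpow_const (by fun_prop) fun _ _ => Or.inr hs1.le).mul
      P.continuous.continuousOn
  · intro x hx
    have hpos : 0 < 1 - x ^ 2 := by nlinarith [hx.1, hx.2, hα.2]
    have hbase : HasDerivAt (fun x : ℝ => 1 - x ^ 2) (-(2 * x)) x := by
      simpa using (hasDerivAt_pow 2 x).const_sub 1
    have hprod := (hbase.rpow_const (p := s + 1) (Or.inl hpos.ne')).mul (P.hasDerivAt x)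
    refine hprod.congr_deriv ?_
    rw [add_sub_cancel_right, Real.rpow_add_one hpos.ne']
    simp only [eval_sub, eval_mul, eval_one, eval_pow, eval_X, eval_C]
    ring

end TruncatedIntegral

section CommutingOperator

/-- The form `(r, s) ↦ ∫_{-1}^α r W_{p,p+q} sᵀ dx` on polynomial rows. -/
noncomputable def truncForm (p q : ℝ) (hpq : 0 < p + q) {α : ℝ} (hα : α ∈ Set.Ioo (-1 : ℝ) 1) :
    PolyRow →ₗ[ℝ] PolyRow →ₗ[ℝ] ℝ :=
  (weightForm p q).compr₂ (truncIntegral (s := (p + q) / 2 - 1) (by linarith) hα)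

/-- The operator `κ (K · rowMul - firstRow ((α - x) δ ·))`, with `κ = 1 / (α p (q + 1))`. For
`q = n - p` and `K = (q + N + 1) (p + N + 1)` its matrix in the rows of `Q_0, …, Q_N` is `L_2`. -/
noncomputable def bandOp (p q K α : ℝ) : PolyRow →ₗ[ℝ] PolyRow :=
  (1 / (α * p * (q + 1))) •
    (K • rowMul p q - firstRow p ∘ₗ LinearMap.mulLeft ℝ (C α - X) ∘ₗ rowDiff q)

lemma bandOp_secondRow {p q : ℝ} (hd : q - p ≠ 0) (K α : ℝ) (g : ℝ[X]) :
    bandOp p q K α (secondRow q g) =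
      (1 / (α * p * (q + 1)) * K * (q / (q - p))) • firstRow p g := by
  simp only [bandOp, LinearMap.smul_apply, LinearMap.sub_apply, LinearMap.comp_apply,
    rowDiff_secondRow, rowMul_secondRow hd, map_zero, sub_zero, smul_smul, mul_assoc]

variable {p q α : ℝ} (hpq : 0 < p + q) (hα : α ∈ Set.Ioo (-1 : ℝ) 1)

lemma truncForm_apply (r s : PolyRow) :
    truncForm p q hpq hα r s =
      truncIntegral (s := (p + q) / 2 - 1) (by linarith) hα (weightForm p q r s) := rfl

lemma truncForm_comm (r s : PolyRow) : truncForm p q hpq hα r s = truncForm p q hpq hα s r := by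
  rw [truncForm_apply, truncForm_apply, weightForm_comm]

lemma truncForm_firstRow {g : ℝ[X]} (hg : g.eval α = 0) (s : PolyRow) :
    truncForm p q hpq hα (firstRow p g) s =
      -p * truncIntegral (s := (p + q) / 2 - 1) (by linarith) hα
        ((1 - X ^ 2) * g * rowDiff q s) := by
  have hexact := truncIntegral_exact (s := (p + q) / 2 - 1) (by linarith) hα
    (P := g * (s.2 - X * s.1)) (by rw [eval_mul, hg, zero_mul])
  rw [show 2 * ((p + q) / 2 - 1 + 1) = p + q by ring] at hexact
  rw [truncForm_apply, weightForm_firstRow, ← smul_eq_C_mul, map_smul, map_sub,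
    hexact, zero_sub, smul_eq_mul, mul_neg, neg_mul]

lemma isSelfAdjoint_bandOp (hd : q - p ≠ 0) (K : ℝ) :
    (truncForm p q hpq hα).IsSelfAdjoint (bandOp p q K α) := by
  have hmul : (truncForm p q hpq hα).IsSelfAdjoint (rowMul p q) := fun r s => by
    rw [truncForm_apply, truncForm_apply, isSelfAdjoint_rowMul hd r s]
  have hdiff : (truncForm p q hpq hα).IsSelfAdjoint
      (firstRow p ∘ₗ LinearMap.mulLeft ℝ (C α - X) ∘ₗ rowDiff q) := by
    have hvanish (g : ℝ[X]) : ((C α - X) * g).eval α = 0 := by simp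
    intro r s
    rw [truncForm_comm hpq hα r]
    simp only [LinearMap.comp_apply, LinearMap.mulLeft_apply,
      truncForm_firstRow hpq hα (hvanish _)]
    ring_nf
  exact ((hmul.smul K).sub hdiff).smul _

end CommutingOperator

section GramMatrix

lemma mul_gram_eq_gram_mul {R E ι : Type*} [CommSemiring R] [AddCommMonoid E] [Module R E]
    [Fintype ι] {B : E →ₗ[R] E →ₗ[R] R} {T : E → E} (hT : B.IsSelfAdjoint T) {v : ι → E}
    {A : Matrix ι ι R} (hA : A.IsSymm) (hAv : ∀ i, T (v i) = ∑ j, A i j • v j) :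
    A * Matrix.of (fun i j => B (v i) (v j)) = Matrix.of (fun i j => B (v i) (v j)) * A := by
  ext i j
  calc (A * Matrix.of fun i j => B (v i) (v j)) i j = B (T (v i)) (v j) := by
        simp [Matrix.mul_apply, hAv]
    _ = B (v i) (T (v j)) := hT _ _
    _ = ((Matrix.of fun i j => B (v i) (v j)) * A) i j := by
        simp [Matrix.mul_apply, hAv, hA.apply, mul_comm]

end GramMatrix

section GegenbauerRows

variable {p q l : ℝ} (hl : 2 * l = p + q + 1) (hp : 0 < p) (hq : 0 < q) (i : ℕ)
include hl hp hq

lemma rowDiff_firstRow_gegPoly :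
    rowDiff q (firstRow p (gegPoly l i)) = -((p + i) * (q + i + 1)) • gegPoly l i := by
  rw [rowDiff_firstRow hl, gegOp_gegPoly (by linarith), hl, smul_eq_C_mul]
  simp only [C_add, C_mul, C_neg, C_1]
  ring

lemma X_smul_firstRow_gegPoly :
    (X : ℝ[X]) • firstRow p (gegPoly l i) =
      firstRow p (X * gegPoly l i + (1 / ((q + i) * (p + i + 1))) •
        ((1 - X ^ 2) * derivative (gegPoly l i) - C q * X * gegPoly l i)) -
      (p / ((q + i) * (p + i + 1))) • secondRow q (gegPoly l i) := by
  have hode : gegOp l (gegPoly l i) - C (q * (p + 1)) * gegPoly l i =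
      -((q + i) * (p + i + 1)) • gegPoly l i := by
    rw [gegOp_gegPoly (by linarith), hl, smul_eq_C_mul]
    simp only [C_add, C_mul, C_neg, C_1]
    ring
  have hμ : (q + i) * (p + i + 1) ≠ 0 := by positivity
  rw [map_add, map_smul, firstRow_X_mul, firstRow_one_sub_sq_mul_derivative_sub hl, hode,
    smul_assoc, smul_add, smul_smul, smul_smul, one_div_mul_eq_div, mul_neg,
    one_div_mul_cancel hμ, neg_one_smul]
  abel

lemma gegPoly_ladder (N : ℝ) :
    ((q + N + 1) * (p + N + 1)) • (X * gegPoly l i + (1 / ((q + i) * (p + i + 1))) •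
        ((1 - X ^ 2) * derivative (gegPoly l i) - C q * X * gegPoly l i)) -
      ((p + i) * (q + i + 1)) • (X * gegPoly l i) =
      ((N - i) * (N + p + q + i + 2) * ((i + 1) * (p + i)) / ((p + q + 2 * i + 1) * (p + i + 1))) •
        gegPoly l (i + 1) +
      ((N - i + 1) * (N + p + q + i + 1) * (q + i + 1) / ((p + q + 2 * i + 1) * (q + i))) •
        ((1 - X ^ 2) * derivative (gegPoly l i) + C (i : ℝ) * X * gegPoly l i) := by
  refine Polynomial.funext fun x => ?_
  have hraise := congrArg (eval x) (gegPoly_succ (show 0 < l by linarith) i)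
  simp only [eval_add, eval_sub, eval_mul, eval_smul, eval_C, eval_X, eval_one, eval_pow,
    smul_eq_mul, hl] at hraise ⊢
  rw [mul_comm ((i : ℝ) + 1), ← eq_div_iff (by positivity)] at hraise
  rw [hraise]
  field_simp
  ring

lemma bandOp_firstRow_gegPoly (hd : q - p ≠ 0) {α : ℝ} (hα : α ≠ 0) (N : ℝ) :
    bandOp p q ((q + N + 1) * (p + N + 1)) α (firstRow p (gegPoly l i)) =
      ((p + i) * (q + i + 1) / (p * (q + 1))) • firstRow p (gegPoly l i) +
      ((q + N + 1) * (p + N + 1) / (α * (q + 1) * (q - p)) *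
        ((p + i) * (q + i + 1) / ((q + i) * (p + i + 1)))) • secondRow q (gegPoly l i) +
      (1 / (α * p * (q + 1))) •
        (((N - i) * (N + p + q + i + 2) * ((i + 1) * (p + i)) /
            ((p + q + 2 * i + 1) * (p + i + 1))) • firstRow p (gegPoly l (i + 1)) +
          ((N - i + 1) * (N + p + q + i + 1) * (q + i + 1) / ((p + q + 2 * i + 1) * (q + i))) •
            firstRow p ((1 - X ^ 2) * derivative (gegPoly l i) +
              C (i : ℝ) * X * gegPoly l i)) := by
  have hladder := congrArg (firstRow p) (gegPoly_ladder hl hp hq i N)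
  rw [map_add (firstRow p), map_sub (firstRow p), map_smul, map_smul, map_smul, map_smul] at hladder
  rw [← hladder]
  simp only [bandOp, LinearMap.smul_apply, LinearMap.sub_apply, LinearMap.comp_apply,
    LinearMap.mulLeft_apply, rowDiff_firstRow_gegPoly hl hp hq, rowMul_firstRow hd,
    X_smul_firstRow_gegPoly hl hp hq, sub_mul, map_smul, map_sub, ← smul_eq_C_mul]
  match_scalars <;> field_simp
  ring

end GegenbauerRows

section Normalization

/-- The square of the scalar factor of `S_w`. -/
noncomputable def scaleSq (n w : ℕ) : ℝ :=
  ((w.factorial : ℝ) * ((n : ℝ) + 1) * ((n : ℝ) + 2 * w + 1) *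
      Real.Gamma ((n : ℝ) / 2 + 3 / 2)) /
    (Real.sqrt Real.pi * 2 ^ (w / 2) * Real.Gamma ((n : ℝ) / 2 + 1 + (w / 2 : ℕ)) *
      ∏ k ∈ Finset.range ((w + 1) / 2), ((n : ℝ) + 2 * k + 1))

/-- The scalar by which the first row of `Q_w` differs from `firstRow p C_w^{(n+1)/2}`, where
`q = n - p`. Swapping `p` and `q` gives the scalar for the second row. -/
noncomputable def rowScale (n : ℕ) (p q : ℝ) (w : ℕ) : ℝ :=
  Real.sqrt (scaleSq n w / (p * (p + w) * (q + w + 1))) / (n + 1)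

lemma scaleSq_pos (n w : ℕ) : 0 < scaleSq n w := by
  have hprod : 0 < ∏ k ∈ Finset.range ((w + 1) / 2), ((n : ℝ) + 2 * k + 1) :=
    Finset.prod_pos fun _ _ => by positivity
  have hΓ : 0 < Real.Gamma ((n : ℝ) / 2 + 3 / 2) := Real.Gamma_pos_of_pos (by positivity)
  unfold scaleSq
  positivity

lemma scaleSq_succ (n w : ℕ) :
    scaleSq n (w + 1) =
      scaleSq n w * (((w : ℝ) + 1) * (n + 2 * w + 3) / ((n + 2 * w + 1) * (n + w + 1))) := by
  rcases Nat.even_or_odd' w with ⟨m, rfl | rfl⟩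
  · simp only [scaleSq, show 2 * m / 2 = m by lia, show (2 * m + 1) / 2 = m by lia,
      show (2 * m + 1 + 1) / 2 = m + 1 by lia, Finset.prod_range_succ, Nat.factorial_succ]
    push_cast
    field_simp
    ring
  · have hΓ_succ : Real.Gamma ((n : ℝ) / 2 + 1 + (m + 1 : ℕ)) =
        (n + 2 + 2 * m) / 2 * Real.Gamma ((n : ℝ) / 2 + 1 + m) := by
      rw [Nat.cast_succ, ← add_assoc, Real.Gamma_add_one (by positivity)]
      ring
    simp only [scaleSq, show (2 * m + 1) / 2 = m by lia, show (2 * m + 1 + 1) / 2 = m + 1 by lia,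
      show (2 * m + 1 + 1 + 1) / 2 = m + 1 by lia, Nat.factorial_succ, hΓ_succ]
    push_cast
    field_simp
    ring

lemma sqrt_mul_sqrt_eq {a b c d : ℝ} (ha : 0 ≤ a) (hc : 0 ≤ c) (h : a * b = c ^ 2 * d) :
    Real.sqrt a * Real.sqrt b = c * Real.sqrt d := by
  rw [← Real.sqrt_mul ha, h, Real.sqrt_mul (sq_nonneg c), Real.sqrt_sq hc]

end Normalization

section Entries

lemma L2a_succ {n : ℕ} {p q : ℝ} (hn : (n : ℝ) = p + q) (i : ℕ) :
    L2a n p (i + 1) = (p + i) * (q + i + 1) / (p * (q + 1)) := by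
  simp only [L2a, hn]
  push_cast
  congr 1 <;> ring

lemma L2b_succ {n : ℕ} {p q : ℝ} (hn : (n : ℝ) = p + q) (α : ℝ) (N i : ℕ) :
    L2b n p α N (i + 1) =
      (q + N + 1) * (p + N + 1) / (α * (q + 1) * (q - p)) *
        Real.sqrt ((q + i + 1) * (p + i) * q / (p * (p + i + 1) * (q + i))) := by
  simp only [L2b, hn]
  push_cast
  congr 2
  · ring
  · ring
  · congr 1 <;> ring

lemma L2e_succ {n : ℕ} {p q : ℝ} (hn : (n : ℝ) = p + q) (α : ℝ) (N i : ℕ) :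
    L2e n p α N (i + 1) =
      (N - i) * (N + p + q + i + 2) / (α * p * (q + 1)) *
        Real.sqrt ((i + 1) * (p + i) * (q + i + 2) * (p + q + i + 1) /
          ((p + q + 2 * i + 1) * (p + q + 2 * i + 3) * (p + i + 1) * (q + i + 1))) := by
  simp only [L2e, hn]
  push_cast
  congr 2
  · ring
  · ring
  · congr 1 <;> ring

lemma L2e_zero (n : ℕ) (p α : ℝ) (N : ℕ) : L2e n p α N 0 = 0 := by simp [L2e]

lemma L2e_add_one_self (n : ℕ) (p α : ℝ) (N : ℕ) : L2e n p α N (N + 1) = 0 := by simp [L2e]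

variable {n : ℕ} {p q : ℝ} (hp : 0 < p) (hq : 0 < q)
include hp hq

lemma sqrt_mul_rowScale_swap (i : ℕ) :
    Real.sqrt ((q + i + 1) * (p + i) * q / (p * (p + i + 1) * (q + i))) * rowScale n q p i =
      (p + i) * (q + i + 1) / ((q + i) * (p + i + 1)) * rowScale n p q i := by
  simp only [rowScale, ← mul_div_assoc]
  congr 1
  refine sqrt_mul_sqrt_eq (by positivity) (by positivity) ?_
  field_simp

lemma sqrt_mul_rowScale (i : ℕ) :
    Real.sqrt ((q + i + 1) * (p + i) * q / (p * (p + i + 1) * (q + i))) * rowScale n p q i =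
      q / p * rowScale n q p i := by
  simp only [rowScale, ← mul_div_assoc]
  congr 1
  refine sqrt_mul_sqrt_eq (by positivity) (by positivity) ?_
  field_simp

variable (hn : (n : ℝ) = p + q)
include hn

lemma sqrt_mul_rowScale_succ (i : ℕ) :
    Real.sqrt ((i + 1) * (p + i) * (q + i + 2) * (p + q + i + 1) /
        ((p + q + 2 * i + 1) * (p + q + 2 * i + 3) * (p + i + 1) * (q + i + 1))) *
        rowScale n p q (i + 1) =
      (i + 1) * (p + i) / ((p + q + 2 * i + 1) * (p + i + 1)) * rowScale n p q i := by
  simp only [rowScale, ← mul_div_assoc, scaleSq_succ, hn]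
  congr 1
  refine sqrt_mul_sqrt_eq (by positivity) (by positivity) ?_
  push_cast
  field_simp
  ring

lemma sqrt_mul_rowScale_eq_rowScale_succ (i : ℕ) :
    Real.sqrt ((i + 1) * (p + i) * (q + i + 2) * (p + q + i + 1) /
        ((p + q + 2 * i + 1) * (p + q + 2 * i + 3) * (p + i + 1) * (q + i + 1))) *
        rowScale n p q i =
      (q + i + 2) * (p + q + i + 1) / ((p + q + 2 * i + 3) * (q + i + 1)) *
        rowScale n p q (i + 1) := by
  simp only [rowScale, ← mul_div_assoc, scaleSq_succ, hn]
  congr 1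
  refine sqrt_mul_sqrt_eq (by positivity) (by positivity) ?_
  push_cast
  field_simp
  ring

end Entries

section OrthonormalRows

/-- The rows of `Q_0, Q_1, …`, listed with the rows of `Q_w` at `2 w` and `2 w + 1`. The parameter
`q` stands for `n - p`. -/
noncomputable def orthonormalRow (n : ℕ) (p q : ℝ) (r : ℕ) : PolyRow :=
  if r % 2 = 0 then rowScale n p q (r / 2) • firstRow p (gegPoly (((n : ℝ) + 1) / 2) (r / 2))
  else rowScale n q p (r / 2) • secondRow q (gegPoly (((n : ℝ) + 1) / 2) (r / 2))

lemma orthonormalRow_two_mul (n : ℕ) (p q : ℝ) (w : ℕ) :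
    orthonormalRow n p q (2 * w) =
      rowScale n p q w • firstRow p (gegPoly (((n : ℝ) + 1) / 2) w) := by
  simp [orthonormalRow]

lemma orthonormalRow_two_mul_add_one (n : ℕ) (p q : ℝ) (w : ℕ) :
    orthonormalRow n p q (2 * w + 1) =
      rowScale n q p w • secondRow q (gegPoly (((n : ℝ) + 1) / 2) w) := by
  simp [orthonormalRow, show (2 * w + 1) / 2 = w by lia]

lemma sqrt_mul_sqrt_div_eq_rowScale {p q : ℝ} (hp : 0 < p) (n w : ℕ) :
    Real.sqrt (scaleSq n w) * Real.sqrt ((p + w) / (p * (q + w + 1))) =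
      (n + 1) * (p + w) * rowScale n p q w := by
  rw [rowScale, mul_div_assoc', mul_right_comm, mul_assoc, mul_div_cancel_left₀ _ (by positivity),
    mul_comm _ (p + (w : ℝ))]
  refine sqrt_mul_sqrt_eq (scaleSq_pos n w).le (by positivity) ?_
  field_simp

variable {n : ℕ} {p q : ℝ} (hn : (n : ℝ) = p + q) (hp : 0 < p) (hq : 0 < q)
include hn hp hq

lemma Smat_eq_diagonal (w : ℕ) :
    Smat n p w = Matrix.diagonal
      ![(n + 1) * (p + w) * rowScale n p q w, (n + 1) * (q + w) * rowScale n q p w] := by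
  rw [← sqrt_mul_sqrt_div_eq_rowScale hp n w, ← sqrt_mul_sqrt_div_eq_rowScale hq n w, Smat,
    show (n : ℝ) - p = q by linarith, ← scaleSq, ← Matrix.diagonal_smul, Matrix.smul_cons,
    Matrix.smul_cons, Matrix.smul_empty, smul_eq_mul, smul_eq_mul]

lemma Qmat_apply (w : ℕ) (x : ℝ) (a : Fin 2) :
    Qmat n p w x a = ![(orthonormalRow n p q (2 * w + a)).1.eval x,
      (orthonormalRow n p q (2 * w + a)).2.eval x] := by
  have hl : 0 < ((n : ℝ) + 1) / 2 := by positivity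
  have hl' : 2 * (((n : ℝ) + 1) / 2) = n + 1 := by ring
  have hshift : ((n : ℝ) + 3) / 2 = ((n : ℝ) + 1) / 2 + 1 := by ring
  have hnp : (n : ℝ) - p = q := by linarith
  ext b
  simp only [Qmat, Smat_eq_diagonal hn hp hq, Matrix.diagonal_mul, Pmat, hnp, hshift, geg_natCast,
    geg_add_one_sub_one hl, geg_add_one_sub_two hl, hl']
  fin_cases a <;> fin_cases b <;>
    simp only [Fin.zero_eta, Fin.mk_one, Fin.isValue, of_apply, cons_val',
      cons_val_zero, cons_val_one, cons_val_fin_one, add_zero, orthonormalRow_two_mul,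
      orthonormalRow_two_mul_add_one, firstRow_apply, secondRow_apply, Prod.smul_mk, eval_add,
      eval_smul, eval_mul, eval_C, eval_X, smul_eq_mul] <;>
    field_simp
  all_goals ring

lemma Mfull_eq_truncForm (α : ℝ) (hα : α ∈ Set.Ioo (-1 : ℝ) 1) (N : ℕ) :
    Mfull n p α N = Matrix.of fun r c : Fin (2 * (N + 1)) =>
      truncForm p q (add_pos hp hq) hα (orthonormalRow n p q r) (orthonormalRow n p q c) := by
  ext r c
  simp only [Mfull, Mblk, Matrix.of_apply, truncForm_apply, truncIntegral_apply]
  refine intervalIntegral.integral_congr fun x _ => ?_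
  simp only [Matrix.mul_apply, Matrix.transpose_apply, Fin.sum_univ_two, Qmat_apply hn hp hq,
    Nat.div_add_mod, Wmat, weightForm_apply, hn, add_sub_cancel_left, Matrix.smul_apply, of_apply,
    cons_val', cons_val_zero, cons_val_one, cons_val_fin_one, smul_eq_mul, C_add, eval_add,
    eval_sub, eval_mul, eval_pow, eval_C, eval_X]
  ring

end OrthonormalRows

section BandMatrix

lemma L2_isSymm (n : ℕ) (p α : ℝ) (N : ℕ) : (L2 n p α N).IsSymm := by
  ext r s
  simp only [Matrix.transpose_apply, L2, Matrix.of_apply]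
  split_ifs <;> first | rfl | lia

variable {E : Type*} [AddCommMonoid E] [Module ℝ E]

lemma sum_fin_ite_val_eq_smul {m k : ℕ} (f : ℕ → E) {c : ℝ} (hc : m ≤ k → c = 0) :
    ∑ s : Fin m, (if s.val = k then c else 0) • f s = c • f k := by
  rcases lt_or_ge k m with hk | hk
  · rw [Finset.sum_eq_single ⟨k, hk⟩ (by simp +contextual [Fin.ext_iff]) (by simp)]
    simp
  · simp [hc hk]

variable (n : ℕ) (p α : ℝ) {N i : ℕ} (f : ℕ → E) (r : Fin (2 * (N + 1)))

lemma sum_L2_smul_even (hr : r.val = 2 * i) :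
    ∑ s, L2 n p α N r s • f s =
      L2a n p (i + 1) • f (2 * i) + L2b n p α N (i + 1) • f (2 * i + 1) +
        (L2e n p α N (i + 1) • f (2 * (i + 1)) + L2e n p α N i • f (2 * (i - 1))) := by
  have hi := r.isLt
  have hentry (s : Fin (2 * (N + 1))) : L2 n p α N r s =
      (if s.val = 2 * i then L2a n p (i + 1) else 0) +
      (if s.val = 2 * i + 1 then L2b n p α N (i + 1) else 0) +
      ((if s.val = 2 * (i + 1) then L2e n p α N (i + 1) else 0) +
        (if s.val = 2 * (i - 1) then L2e n p α N i else 0)) := by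
    cases i with
    | zero => simp only [L2, Matrix.of_apply, hr, L2e_zero]; grind
    | succ i => simp only [L2, Matrix.of_apply, hr]; grind
  simp only [hentry, add_smul, Finset.sum_add_distrib]
  rw [sum_fin_ite_val_eq_smul f (by lia), sum_fin_ite_val_eq_smul f (by lia),
    sum_fin_ite_val_eq_smul f, sum_fin_ite_val_eq_smul f (by lia)]
  intro h
  rw [show i = N by lia, L2e_add_one_self]

lemma sum_L2_smul_odd (hr : r.val = 2 * i + 1) :
    ∑ s, L2 n p α N r s • f s = L2b n p α N (i + 1) • f (2 * i) := by
  have hi := r.isLt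
  have hentry (s : Fin (2 * (N + 1))) : L2 n p α N r s =
      if s.val = 2 * i then L2b n p α N (i + 1) else 0 := by
    simp only [L2, Matrix.of_apply, hr]
    split_ifs <;> first | rfl | lia | (congr 1; lia)
  simp only [hentry]
  exact sum_fin_ite_val_eq_smul f (by lia)

end BandMatrix

section BandMatrixAction

variable {n : ℕ} {p q α : ℝ} (hn : (n : ℝ) = p + q) (hp : 0 < p) (hq : 0 < q) (hd : q - p ≠ 0)
  (hα : α ≠ 0) (N i : ℕ)
include hn hp hq

lemma L2e_succ_smul_orthonormalRow_succ :
    L2e n p α N (i + 1) • orthonormalRow n p q (2 * (i + 1)) =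
      (rowScale n p q i * (1 / (α * p * (q + 1))) *
        ((N - i) * (N + p + q + i + 2) * ((i + 1) * (p + i)) /
          ((p + q + 2 * i + 1) * (p + i + 1)))) •
        firstRow p (gegPoly (((n : ℝ) + 1) / 2) (i + 1)) := by
  rw [orthonormalRow_two_mul, smul_smul, L2e_succ hn, mul_assoc, sqrt_mul_rowScale_succ hp hq hn]
  congr 1
  ring

lemma L2e_smul_orthonormalRow_pred :
    L2e n p α N i • orthonormalRow n p q (2 * (i - 1)) =
      (rowScale n p q i * (1 / (α * p * (q + 1))) *
        ((N - i + 1) * (N + p + q + i + 1) * (q + i + 1) / ((p + q + 2 * i + 1) * (q + i)))) •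
        firstRow p ((1 - X ^ 2) * derivative (gegPoly (((n : ℝ) + 1) / 2) i) +
              C (i : ℝ) * X * gegPoly (((n : ℝ) + 1) / 2) i) := by
  cases i with
  | zero => simp [L2e_zero, gegPoly_zero]
  | succ i =>
    rw [Nat.add_sub_cancel, orthonormalRow_two_mul, smul_smul, L2e_succ hn, mul_assoc,
      sqrt_mul_rowScale_eq_rowScale_succ hp hq hn, Nat.cast_succ,
      one_sub_sq_mul_derivative_gegPoly_succ (by positivity), ← smul_eq_C_mul, map_smul, smul_smul,
      mul_div_cancel₀ _ two_ne_zero, hn]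
    congr 1
    field_simp
    ring

include hd

lemma bandOp_orthonormalRow_odd :
    bandOp p q ((q + N + 1) * (p + N + 1)) α (orthonormalRow n p q (2 * i + 1)) =
      L2b n p α N (i + 1) • orthonormalRow n p q (2 * i) := by
  rw [orthonormalRow_two_mul, orthonormalRow_two_mul_add_one, map_smul, bandOp_secondRow hd,
    smul_smul, smul_smul, L2b_succ hn, mul_assoc _ (Real.sqrt _), sqrt_mul_rowScale hp hq]
  congr 1
  field_simp

include hα

lemma bandOp_orthonormalRow_even :
    bandOp p q ((q + N + 1) * (p + N + 1)) α (orthonormalRow n p q (2 * i)) =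
      L2a n p (i + 1) • orthonormalRow n p q (2 * i) +
        L2b n p α N (i + 1) • orthonormalRow n p q (2 * i + 1) +
        (L2e n p α N (i + 1) • orthonormalRow n p q (2 * (i + 1)) +
          L2e n p α N i • orthonormalRow n p q (2 * (i - 1))) := by
  rw [L2e_succ_smul_orthonormalRow_succ hn hp hq, L2e_smul_orthonormalRow_pred hn hp hq,
    orthonormalRow_two_mul, orthonormalRow_two_mul_add_one, map_smul,
    bandOp_firstRow_gegPoly (by rw [← hn]; ring) hp hq i hd hα, L2a_succ hn, L2b_succ hn,
    smul_smul _ (rowScale n q p i), mul_assoc _ (Real.sqrt _), sqrt_mul_rowScale_swap hp hq]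
  module

lemma bandOp_orthonormalRow (r : Fin (2 * (N + 1))) :
    bandOp p q ((q + N + 1) * (p + N + 1)) α (orthonormalRow n p q r) =
      ∑ s, L2 n p α N r s • orthonormalRow n p q s := by
  rcases Nat.even_or_odd' r.val with ⟨i, hr | hr⟩
  · rw [sum_L2_smul_even n p α _ r hr, hr, bandOp_orthonormalRow_even hn hp hq hd hα]
  · rw [sum_L2_smul_odd n p α _ r hr, hr, bandOp_orthonormalRow_odd hn hp hq hd]

end BandMatrixAction

/-- `L_2` commutes with `M`. -/
theorem stmt_10 (n : ℕ) (hn : 1 ≤ n) (p : ℝ) (hp : 0 < p) (hpn : p < n)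
    (N : ℕ) (α : ℝ) (hα : α ∈ Set.Ioo (-1 : ℝ) 1) (hα0 : α ≠ 0)
    (hp2 : p ≠ (n : ℝ) / 2) :
    L2 n p α N * Mfull n p α N = Mfull n p α N * L2 n p α N := by
  have hn' : (n : ℝ) = p + (n - p) := by ring
  have hq : 0 < (n : ℝ) - p := sub_pos.mpr hpn
  have hd : (n : ℝ) - p - p ≠ 0 := fun h => hp2 (by linarith)
  rw [Mfull_eq_truncForm hn' hp hq α hα]
  exact mul_gram_eq_gram_mul (isSelfAdjoint_bandOp (add_pos hp hq) hα hd _) (L2_isSymm n p α N)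
    (bandOp_orthonormalRow hn' hp hq hd hα0 N)
end

section
/- Let L be a real symmetric matrix of the structural form described in the context (size 2(N+1)), and suppose L_{2j-1,2j} ≠ 0 for all j = 1, …, N+1. Then L is invertible; in particular 0 is not an eigenvalue of L. -/
open Matrix

/-- A real symmetric `2(N+1) × 2(N+1)` matrix `L` has the *structural form* if its only
possibly nonzero entries (in 1-based indexing, together with the symmetrically placed
entries) are: the even diagonal entries `L_{2j,2j}` for `j = 1, …, N+1`; the entries
`L_{2j-1,2j}` for `j = 1, …, N+1`; and the entries `L_{2j,2j+2}` for `j = 1, …, N`.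
(Here indices are 0-based, so `L_{2j,2j}` is `L i i` with `i` odd, `L_{2j-1,2j}` is
`L i (i+1)` with `i` even, and `L_{2j,2j+2}` is `L i (i+2)` with `i` odd.) -/
def StructForm (N : ℕ) (L : Matrix (Fin (2 * (N + 1))) (Fin (2 * (N + 1))) ℝ) : Prop :=
  Lᵀ = L ∧
    ∀ i j : Fin (2 * (N + 1)), i.val ≤ j.val → L i j ≠ 0 →
      (j.val = i.val ∧ i.val % 2 = 1) ∨
      (j.val = i.val + 1 ∧ i.val % 2 = 0) ∨
      (j.val = i.val + 2 ∧ i.val % 2 = 1)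

/-!
List the even (0-based) indices before the odd ones. The even rows and columns of `L` meet only in
zeros, and an even row `2j` meets the odd columns only in column `2j + 1`, so `L` becomes
`[[0, B], [B, D]]` with `B` diagonal. Exchanging the two block columns makes this block triangular
with diagonal blocks `B`, `B`, so `L` is invertible as soon as `B` is, whatever `D` may be.
-/

theorem isUnit_fromBlocks_zero₁₁ {n R : Type*} [Fintype n] [DecidableEq n] [CommRing R]
    {B C D : Matrix n n R} : IsUnit (fromBlocks 0 B C D) ↔ IsUnit B ∧ IsUnit C := by
  rw [← isUnit_submatrix_equiv (Equiv.refl _) (Equiv.sumComm n n), Equiv.coe_refl,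
    Equiv.sumComm_apply, fromBlocks_submatrix_sum_swap_right, submatrix_id_id,
    isUnit_fromBlocks_zero₁₂]

/-- The reordering of the indices `0, …, 2n - 1` that puts the even ones before the odd ones:
`inl j` stands for `2j` and `inr j` for `2j + 1`. It exhibits the block structure of matrices of
structural form. -/
def evenOddEquiv (n : ℕ) : Fin n ⊕ Fin n ≃ Fin (2 * n) where
  toFun := Sum.elim (fun j ↦ ⟨2 * j, by omega⟩) (fun j ↦ ⟨2 * j + 1, by omega⟩)
  invFun i := if Even i.val then .inl ⟨i / 2, by omega⟩ else .inr ⟨i / 2, by omega⟩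
  left_inv := by
    rintro (j | j)
    · simp
    · simp [Nat.mul_add_div]
  right_inv i := by
    by_cases hi : Even i.val
    · simp [hi, Nat.two_mul_div_two_of_even hi]
    · simp [hi, Nat.two_mul_div_two_add_one_of_odd (Nat.not_even_iff_odd.mp hi)]

namespace StructForm

variable {N : ℕ} {L : Matrix (Fin (2 * (N + 1))) (Fin (2 * (N + 1))) ℝ}

theorem isSymm (hL : StructForm N L) : L.IsSymm := hL.1

theorem apply_eq_zero_of_even (hL : StructForm N L) {i j : Fin (2 * (N + 1))}
    (hi : Even i.val) (hij : j.val ≠ i.val + 1) : L i j = 0 := by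
  rw [Nat.even_iff] at hi
  by_contra hne
  rcases le_total i.val j.val with hle | hle
  · have := hL.2 i j hle hne
    omega
  · have := hL.2 j i hle (hL.isSymm.apply i j ▸ hne)
    omega

theorem submatrix_evenOddEquiv (hL : StructForm N L) :
    let e := evenOddEquiv (N + 1)
    let b : Fin (N + 1) → ℝ := fun j ↦ L (e (.inl j)) (e (.inr j))
    L.submatrix e e = fromBlocks 0 (diagonal b) (diagonal b) (L.submatrix e e).toBlocks₂₂ := by
  intro e b
  have even_even (j k : Fin (N + 1)) : L (e (.inl j)) (e (.inl k)) = 0 :=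
    hL.apply_eq_zero_of_even (even_two_mul _) (show 2 * k.val ≠ 2 * j.val + 1 by omega)
  have even_odd (j k : Fin (N + 1)) : L (e (.inl j)) (e (.inr k)) = diagonal b j k := by
    rcases eq_or_ne j k with rfl | hjk
    · rw [diagonal_apply_eq]
    · rw [diagonal_apply_ne _ hjk]
      exact hL.apply_eq_zero_of_even (even_two_mul _)
        (show 2 * k.val + 1 ≠ 2 * j.val + 1 by omega)
  ext (j | j) (k | k)
  · exact even_even j k
  · exact even_odd j k
  · calc L (e (.inr j)) (e (.inl k)) = L (e (.inl k)) (e (.inr j)) := hL.isSymm.apply _ _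
      _ = diagonal b k j := even_odd k j
      _ = diagonal b j k := (isSymm_diagonal b).apply j k
  · rfl

end StructForm

theorem stmt_13_general {m n R : Type*} [Fintype m] [DecidableEq m] [Fintype n] [DecidableEq n]
    [CommRing R] {L : Matrix m m R} {B C D : Matrix n n R} (e : n ⊕ n ≃ m)
    (hL : L.submatrix e e = fromBlocks 0 B C D) (hB : IsUnit B) (hC : IsUnit C) :
    IsUnit L ∧ ∀ X : m → R, X ≠ 0 → L.mulVec X ≠ 0 := by
  have hunit : IsUnit L := by
    rw [← isUnit_submatrix_equiv e e, hL]
    exact isUnit_fromBlocks_zero₁₁.mpr ⟨hB, hC⟩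
  refine ⟨hunit, fun X hX hLX ↦ hX ?_⟩
  exact mulVec_injective_of_isUnit hunit (hLX.trans (mulVec_zero L).symm)

/-- If `L` has the structural form and all entries `L_{2j-1,2j}` are nonzero, then `L`
is invertible; in particular `0` is not an eigenvalue of `L`. -/
theorem stmt_13 (N : ℕ) (L : Matrix (Fin (2 * (N + 1))) (Fin (2 * (N + 1))) ℝ)
    (hL : StructForm N L)
    (hb : ∀ j : Fin (N + 1),
      L ⟨2 * j.val, by have := j.isLt; omega⟩ ⟨2 * j.val + 1, by have := j.isLt; omega⟩ ≠ 0) :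
    IsUnit L ∧ ∀ X : Fin (2 * (N + 1)) → ℝ, X ≠ 0 → L.mulVec X ≠ 0 := by
  have hB := isUnit_diagonal.mpr (Pi.isUnit_iff.mpr fun j ↦ (hb j).isUnit)
  exact stmt_13_general (evenOddEquiv (N + 1)) hL.submatrix_evenOddEquiv hB hB
end
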